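/- Let P be a continuous L-ordered set. Then for every x ∈ P, the L-subset ⇑x defined by ⇑x(y) = ⇓y(x) is a Scott open set of P. -/

import Mathlib

open scoped Classical

namespace FuzzyPaper

variable {L : Type*} [Order.Frame L]

/-- The inclusion L-order on L-subsets: sub(A,B) = ⨅ x, A x ⇨ B x. -/
def subF {X : Type*} (A B : X → L) : L := ⨅ x, A x ⇨ B x

/-- `e` is an L-order: reflexivity, transitivity, antisymmetry. -/
def IsLOrder {P : Type*} (e : P → P → L) : Prop :=
  (∀ x, e x x = ⊤) ∧ (∀ x y z, e x y ⊓ e y z ≤ e x z) ∧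
  (∀ x y, e x y ⊓ e y x = ⊤ → x = y)

/-- `D` is a directed L-subset of `(P, e)`. -/
def IsDirectedL {P : Type*} (e : P → P → L) (D : P → L) : Prop :=
  (⨆ x, D x) = ⊤ ∧ ∀ x y, D x ⊓ D y ≤ ⨆ z, D z ⊓ e x z ⊓ e y z

/-- `x` is a supremum of the L-subset `A`: e(x,y) = sub(A, ↓y) for all y. -/
def IsSupOf {P : Type*} (e : P → P → L) (A : P → L) (x : P) : Prop :=
  ∀ y, e x y = ⨅ z, A z ⇨ e z y

/-- The fuzzy way-below L-subset ⇓x :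
⇓x(y) = ⨅_{D directed with a supremum s} (e(x,s) ⇨ ⨆ d, D d ⊓ e(y,d)). -/
def dwb {P : Type*} (e : P → P → L) (x : P) : P → L := fun y =>
  ⨅ Ds : {Ds : (P → L) × P // IsDirectedL e Ds.1 ∧ IsSupOf e Ds.1 Ds.2},
    e x Ds.1.2 ⇨ ⨆ d, Ds.1.1 d ⊓ e y d

/-- A continuous L-ordered set: ⇓x is directed with supremum x, for each x. -/
def IsContinuousLOrder {P : Type*} (e : P → P → L) : Prop :=
  IsLOrder e ∧ ∀ x, IsDirectedL e (dwb e x) ∧ IsSupOf e (dwb e x) x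

/-- An L-dcpo: every directed L-subset has a supremum. -/
def IsLDcpo {P : Type*} (e : P → P → L) : Prop :=
  IsLOrder e ∧ ∀ D, IsDirectedL e D → ∃ x, IsSupOf e D x

/-- A continuous L-dcpo. -/
def IsContinuousLDcpo {P : Type*} (e : P → P → L) : Prop :=
  IsLDcpo e ∧ ∀ x, IsDirectedL e (dwb e x) ∧ IsSupOf e (dwb e x) x

/-- Scott open L-subsets: upper sets inaccessible by directed suprema. -/
def IsScottOpen {P : Type*} (e : P → P → L) (A : P → L) : Prop :=
  (∀ x y, A x ⊓ e x y ≤ A y) ∧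
  ∀ D s, IsDirectedL e D → IsSupOf e D s → A s = ⨆ x, A x ⊓ D x

/-- The Scott L-topology. -/
def scottOpens {P : Type*} (e : P → P → L) : Set (P → L) := {A | IsScottOpen e A}

/-- `𝒪` is a (stratified) L-topology on X. -/
def IsLTop {X : Type*} (𝒪 : Set (X → L)) : Prop :=
  (∀ A ∈ 𝒪, ∀ B ∈ 𝒪, A ⊓ B ∈ 𝒪) ∧ (∀ S ⊆ 𝒪, sSup S ∈ 𝒪) ∧
  (∀ a : L, (fun _ => a) ∈ 𝒪)

/-- T₀ separation. -/
def IsT0 {X : Type*} (𝒪 : Set (X → L)) : Prop :=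
  ∀ x y : X, (∀ A ∈ 𝒪, A x = A y) → x = y

/-- The specialization L-order of an L-topological space. -/
def specE {X : Type*} (𝒪 : Set (X → L)) : X → X → L := fun x y =>
  ⨅ A : 𝒪, (A : X → L) x ⇨ (A : X → L) y

/-- A point of 𝒪(X): preserves binary meets, arbitrary joins and constants. -/
def IsPoint {X : Type*} (𝒪 : Set (X → L)) (p : 𝒪 → L) : Prop :=
  (∀ A B C : 𝒪, (C : X → L) = (A : X → L) ⊓ (B : X → L) → p C = p A ⊓ p B) ∧
  (∀ (S : Set 𝒪) (C : 𝒪), (C : X → L) = sSup (Subtype.val '' S) →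
    p C = ⨆ A ∈ S, p A) ∧
  (∀ (a : L) (C : 𝒪), (C : X → L) = (fun _ => a) → p C = a)

/-- The inclusion L-order on maps 𝒪 → L (in particular on points). -/
def subPt {X : Type*} (𝒪 : Set (X → L)) (p q : 𝒪 → L) : L := ⨅ A, p A ⇨ q A

/-- η : x ↦ [x], where [x](A) = A(x). -/
def etaPt {X : Type*} (𝒪 : Set (X → L)) (x : X) : 𝒪 → L := fun A => (A : X → L) x

/-- L-sobriety: η is a bijection onto the set of points. -/
def IsSober {X : Type*} (𝒪 : Set (X → L)) : Prop :=
  (∀ x y : X, etaPt 𝒪 x = etaPt 𝒪 y → x = y) ∧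
  (∀ p : 𝒪 → L, IsPoint 𝒪 p → ∃ x, p = etaPt 𝒪 x)

/-- Super-compact L-subsets. -/
def IsSuperCompact {X : Type*} (𝒪 : Set (X → L)) (A : X → L) : Prop :=
  (⨆ x, A x) = ⊤ ∧ ∀ S ⊆ 𝒪, subF A (sSup S) = ⨆ V ∈ S, subF A V

/-- Interior operator. -/
def interiorF {X : Type*} (𝒪 : Set (X → L)) (A : X → L) : X → L :=
  sSup {B ∈ 𝒪 | B ≤ A}

/-- Locally super-compact L-topological spaces. -/
def IsLocallySC {X : Type*} (𝒪 : Set (X → L)) : Prop :=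
  ∀ A ∈ 𝒪, A = fun x => ⨆ B ∈ {B | IsSuperCompact 𝒪 B}, subF B A ⊓ interiorF 𝒪 B x

/-- `ℬ` is a base of the L-topology `𝒪`. -/
def IsBase {X : Type*} (𝒪 : Set (X → L)) (ℬ : Set (X → L)) : Prop :=
  ℬ ⊆ 𝒪 ∧ ∀ A ∈ 𝒪, A = fun x => ⨆ B ∈ ℬ, subF B A ⊓ B x

/-- Strong locally super-compact: a base of super-compact open sets. -/
def IsStrongLocallySC {X : Type*} (𝒪 : Set (X → L)) : Prop :=
  ∃ ℬ, IsBase 𝒪 ℬ ∧ ∀ B ∈ ℬ, IsSuperCompact 𝒪 B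

/-- Continuity of maps of L-topological spaces. -/
def LCont {X Y : Type*} (𝒪X : Set (X → L)) (𝒪Y : Set (Y → L)) (f : X → Y) : Prop :=
  ∀ B ∈ 𝒪Y, (B ∘ f) ∈ 𝒪X

/-- k(x)(y) = e(y,x) if y is compact (⇓y(y) = ⊤), and ⊥ otherwise. -/
noncomputable def kfun {P : Type*} (e : P → P → L) (x : P) : P → L := fun y =>
  if dwb e y y = ⊤ then e y x else ⊥

/-- Algebraic L-dcpo. -/
def IsAlgebraicLDcpo {P : Type*} (e : P → P → L) : Prop :=
  IsLDcpo e ∧ ∀ x, IsDirectedL e (kfun e x) ∧ IsSupOf e (kfun e x) x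

/-- Quasihomeomorphism: f^← : 𝒪Y → 𝒪X is a bijection. -/
def IsQuasiHomeo {X Y : Type*} (𝒪X : Set (X → L)) (𝒪Y : Set (Y → L)) (f : X → Y) : Prop :=
  LCont 𝒪X 𝒪Y f ∧ (∀ A ∈ 𝒪X, ∃ B ∈ 𝒪Y, B ∘ f = A) ∧
  (∀ B₁ ∈ 𝒪Y, ∀ B₂ ∈ 𝒪Y, B₁ ∘ f = B₂ ∘ f → B₁ = B₂)

/-- Subspace embedding of L-topological spaces. -/
def IsEmbeddingL {X Y : Type*} (𝒪X : Set (X → L)) (𝒪Y : Set (Y → L)) (f : X → Y) : Prop :=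
  Function.Injective f ∧ 𝒪X = {A | ∃ B ∈ 𝒪Y, B ∘ f = A}

/-- Strict embedding: a quasihomeomorphism which is a subspace embedding. -/
def IsStrictEmbedding {X Y : Type*} (𝒪X : Set (X → L)) (𝒪Y : Set (Y → L)) (f : X → Y) : Prop :=
  IsEmbeddingL 𝒪X 𝒪Y f ∧ IsQuasiHomeo 𝒪X 𝒪Y f

/-- L-sobrification: universal L-sober space over X. -/
def IsSobrification {X Y : Type*} (𝒪X : Set (X → L)) (𝒪Y : Set (Y → L)) (j : X → Y) : Prop :=
  IsLTop 𝒪Y ∧ IsSober 𝒪Y ∧ LCont 𝒪X 𝒪Y j ∧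
  ∀ (Z : Type*) (𝒪Z : Set (Z → L)), IsLTop 𝒪Z → IsSober 𝒪Z →
    ∀ f : X → Z, LCont 𝒪X 𝒪Z f →
      ∃! g : Y → Z, LCont 𝒪Y 𝒪Z g ∧ f = g ∘ j


theorem aux_lower {P : Type*} (e : P → P → L) (he : IsLOrder e) (d x y : P) :
    dwb e d y ⊓ e x y ≤ dwb e d x := by
  unfold dwb
  refine le_iInf fun Ds => ?_
  rw [le_himp_iff]
  have h1 := iInf_le (fun Ds : {Ds : (P → L) × P // IsDirectedL e Ds.1 ∧ IsSupOf e Ds.1 Ds.2} =>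
    e d Ds.1.2 ⇨ ⨆ c, Ds.1.1 c ⊓ e y c) Ds
  rw [le_himp_iff] at h1
  rw [inf_right_comm]
  refine (inf_le_inf_right _ h1).trans ?_
  rw [iSup_inf_eq]
  refine iSup_mono fun c => ?_
  rw [inf_assoc, inf_comm (e y c)]
  exact inf_le_inf_left _ (he.2.1 x y c)

theorem aux_upper {P : Type*} (e : P → P → L) (he : IsLOrder e) (d d' y : P) :
    dwb e d y ⊓ e d d' ≤ dwb e d' y := by
  unfold dwb
  refine le_iInf fun Ds => ?_
  rw [le_himp_iff]
  have h1 := iInf_le (fun Ds : {Ds : (P → L) × P // IsDirectedL e Ds.1 ∧ IsSupOf e Ds.1 Ds.2} =>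
    e d Ds.1.2 ⇨ ⨆ c, Ds.1.1 c ⊓ e y c) Ds
  rw [le_himp_iff] at h1
  refine le_trans ?_ h1
  rw [inf_assoc]
  exact inf_le_inf_left _ (he.2.1 d d' _)

theorem aux_E {P : Type*} (e : P → P → L) (he : IsContinuousLOrder e) (D : P → L) (s : P)
    (hD : IsDirectedL e D) (hs : IsSupOf e D s) :
    IsDirectedL e (fun y => ⨆ d, D d ⊓ dwb e d y) ∧
    IsSupOf e (fun y => ⨆ d, D d ⊓ dwb e d y) s := by
  refine ⟨⟨?_, ?_⟩, ?_⟩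
  · rw [iSup_comm]
    simp_rw [← inf_iSup_eq, (he.2 _).1.1, inf_top_eq]
    exact hD.1
  · intro y z
    simp only [iSup_inf_eq, inf_iSup_eq]
    refine iSup_le fun d' => iSup_le fun d => ?_
    have h1 : (D d ⊓ dwb e d y) ⊓ (D d' ⊓ dwb e d' z)
        ≤ ⨆ c, (D c ⊓ e d c ⊓ e d' c) ⊓ (dwb e d y ⊓ dwb e d' z) := by
      rw [inf_inf_inf_comm, ← iSup_inf_eq]
      exact inf_le_inf_right _ (hD.2 d d')
    have h2 : ∀ c, (D c ⊓ e d c ⊓ e d' c) ⊓ (dwb e d y ⊓ dwb e d' z)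
        ≤ D c ⊓ (dwb e c y ⊓ dwb e c z) := by
      intro c
      rw [inf_assoc (D c), inf_assoc (D c), inf_inf_inf_comm, inf_comm (e d c), inf_comm (e d' c)]
      exact inf_le_inf_left _ (inf_le_inf (aux_upper e he.1 _ _ _) (aux_upper e he.1 _ _ _))
    have h3 : ∀ c, D c ⊓ (dwb e c y ⊓ dwb e c z)
        ≤ ⨆ w, D c ⊓ dwb e c w ⊓ e y w ⊓ e z w := by
      intro c
      refine (inf_le_inf_left _ ((he.2 c).1.2 y z)).trans ?_
      rw [inf_iSup_eq]
      exact iSup_mono fun w => by simp only [inf_assoc]; exact le_rfl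
    refine h1.trans (iSup_le fun c => ((h2 c).trans (h3 c)).trans ?_)
    exact iSup_mono fun w => le_iSup (fun i => D i ⊓ dwb e i w ⊓ e y w ⊓ e z w) c
  · intro t
    rw [hs t]
    simp_rw [iSup_himp_eq, ← himp_himp]
    rw [iInf_comm]
    refine iInf_congr fun d => ?_
    rw [(he.2 d).2 t]
    apply eq_of_forall_le_iff
    intro a
    simp only [le_himp_iff, le_iInf_iff]

/-- In a continuous L-ordered set, ⇑x (y ↦ ⇓y(x)) is Scott open. -/
theorem stmt7 {P : Type*} (e : P → P → L) (he : IsContinuousLOrder e) (x : P) :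
    IsScottOpen e (fun y => dwb e y x) := by
  refine ⟨fun a b => aux_upper e he.1 a b x, fun D s hD hs => le_antisymm ?_ ?_⟩
  · obtain ⟨h1, h2⟩ := aux_E e he D s hD hs
    have h3 := iInf_le (fun Ds : {Ds : (P → L) × P // IsDirectedL e Ds.1 ∧ IsSupOf e Ds.1 Ds.2} =>
      e s Ds.1.2 ⇨ ⨆ c, Ds.1.1 c ⊓ e x c) ⟨(_, s), h1, h2⟩
    simp only [he.1.1, top_himp] at h3
    refine (show dwb e s x ≤ _ from h3).trans (iSup_le fun y => ?_)
    change (⨆ d, D d ⊓ dwb e d y) ⊓ e x y ≤ _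
    rw [iSup_inf_eq]
    refine iSup_mono fun d => ?_
    rw [inf_assoc, inf_comm]
    exact inf_le_inf_right _ (aux_lower e he.1 d x y)
  · refine iSup_le fun d => ?_
    have h := hs s
    rw [he.1.1] at h
    have h' : ⊤ ≤ D d ⇨ e d s := h.le.trans (iInf_le _ d)
    rw [le_himp_iff, top_inf_eq] at h'
    exact (inf_le_inf_left _ h').trans (aux_upper e he.1 d s x)


end FuzzyPaper
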